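/- arXiv:1705.10636 — 2 statements merged into one kernel-verified Lean document; each statement's English description precedes it below -/
import Mathlib

section
/- Let γ ≠ 0, c := (1−γ²)²(1+γ⁻²)/4, H(x,y) := (γ+γ⁻¹)(y−γx)(γy−x) + c, P(a,b,c',d) := (γd−a)(c'−γb) + (d−γc')(γa−b) + c. Let u : ℤ → ℝ → ℝ satisfy u' = H(u₋₁,u)H(u,u₁)(u₂−u₋₂)/(P(u₋₂,u₋₁,u,u₁)P(u₋₁,u,u₁,u₂)) at every site, with P nonvanishing along the solution. Define w(n,t) := H(u(n),u(n+1))/P(u(n−1),u(n),u(n+1),u(n+2)) − 1. Then w satisfies w' = (w+1)( w₂(1/w₁+1)w − w(1/w₋₁+1)w₋₂ + w₁ − w₋₁ ). -/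
/-!
Put `K = γ + γ⁻¹` and let `D(x, y, z) = x - K y + z`. Then
`P(a, b, e, d) = H(b, e) + γ D(a, b, e) D(b, e, d)`, so that `w = -γ D(a, b, e) D(b, e, d) / P` and
the inner factors `D` cancel in `w₂ (1/w₁ + 1) w = w₂ w (H₁ / P₁) / w₁`. Everything is symmetric
under reversal of the lattice, up to the sign of the flow, so it suffices to treat the part of `w'`
coming from the two right-hand sites. By two polynomial identities it equals
`(w + 1) (w₂ (1/w₁ + 1) w + (w₁ + 1) - H₋₁ H₁ / P²)`, and the last summand is
symmetric, hence cancels against the mirror image.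
-/

section Definitions

variable {F : Type*} [Field F]

/-- The three-term second difference, the linear form whose products measure `P - H`. -/
def secondDiff (K x₀ x₁ x₂ : F) : F := x₀ - K * x₁ + x₂

/-- The symmetric biquadratic `H` of (Qut-trig), with `γ` and `γ + γ⁻¹` replaced by independent
parameters `g` and `K`. -/
def edgePoly (g K c x₀ x₁ : F) : F := g * K * (x₀ ^ 2 + x₁ ^ 2 - K * x₀ * x₁) + c

/-- The multi-affine four-point polynomial `P` of (Qut-trig), with `γ` and `γ + γ⁻¹` replaced by
independent parameters `g` and `K`. -/
def quadPoly (g K c x₀ x₁ x₂ x₃ : F) : F :=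
  g * (x₀ * x₁ + x₁ * x₂ + x₂ * x₃ + x₀ * x₃ - K * (x₀ * x₂ + x₁ * x₃)) + c

/-- The right-hand side of the lattice equation (HPut) at the middle one of five consecutive
sites. -/
def latticeFlow (g K c x₀ x₁ x₂ x₃ x₄ : F) : F :=
  edgePoly g K c x₁ x₂ * edgePoly g K c x₂ x₃ * (x₄ - x₀) /
    (quadPoly g K c x₀ x₁ x₂ x₃ * quadPoly g K c x₁ x₂ x₃ x₄)

/-- The Miura-type substitution `w = H / P - 1` at four consecutive sites. -/
def miura (g K c x₀ x₁ x₂ x₃ : F) : F := edgePoly g K c x₁ x₂ / quadPoly g K c x₀ x₁ x₂ x₃ - 1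

/-- The partial derivative of `miura` in its third argument. The numerator `H_z P - H P_z` is
simplified by means of `P - H = g D D'`. -/
def miuraDerivThird (g K c x₀ x₁ x₂ x₃ : F) : F :=
  g * (g * K * (2 * x₂ - K * x₁) * secondDiff K x₀ x₁ x₂ * secondDiff K x₁ x₂ x₃ -
    edgePoly g K c x₁ x₂ * (secondDiff K x₁ x₂ x₃ - K * secondDiff K x₀ x₁ x₂)) /
    quadPoly g K c x₀ x₁ x₂ x₃ ^ 2

/-- The partial derivative of `miura` in its fourth argument. -/
def miuraDerivFourth (g K c x₀ x₁ x₂ x₃ : F) : F :=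
  -(g * edgePoly g K c x₁ x₂ * secondDiff K x₀ x₁ x₂) / quadPoly g K c x₀ x₁ x₂ x₃ ^ 2

end Definitions

section Algebra

variable {F : Type*} [Field F] (g K c : F)

theorem edgePoly_add_inv {γ : F} (hγ : γ ≠ 0) (x y : F) :
    edgePoly γ (γ + γ⁻¹) c x y = (γ + γ⁻¹) * (y - γ * x) * (γ * y - x) + c := by
  unfold edgePoly
  field_simp
  ring

theorem quadPoly_add_inv {γ : F} (hγ : γ ≠ 0) (x₀ x₁ x₂ x₃ : F) :
    quadPoly γ (γ + γ⁻¹) c x₀ x₁ x₂ x₃ =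
      (γ * x₃ - x₀) * (x₂ - γ * x₁) + (x₃ - γ * x₂) * (γ * x₀ - x₁) + c := by
  unfold quadPoly
  field_simp
  ring

theorem edgePoly_comm (x₀ x₁ : F) : edgePoly g K c x₀ x₁ = edgePoly g K c x₁ x₀ := by
  unfold edgePoly
  ring

theorem quadPoly_reverse (x₀ x₁ x₂ x₃ : F) :
    quadPoly g K c x₀ x₁ x₂ x₃ = quadPoly g K c x₃ x₂ x₁ x₀ := by
  unfold quadPoly
  ring

theorem miura_reverse (x₀ x₁ x₂ x₃ : F) :
    miura g K c x₀ x₁ x₂ x₃ = miura g K c x₃ x₂ x₁ x₀ := by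
  rw [miura, miura, edgePoly_comm, quadPoly_reverse]

theorem latticeFlow_reverse (x₀ x₁ x₂ x₃ x₄ : F) :
    latticeFlow g K c x₀ x₁ x₂ x₃ x₄ = -latticeFlow g K c x₄ x₃ x₂ x₁ x₀ := by
  rw [latticeFlow, latticeFlow, edgePoly_comm g K c x₁ x₂, edgePoly_comm g K c x₂ x₃,
    quadPoly_reverse g K c x₀, quadPoly_reverse g K c x₁]
  ring

theorem quadPoly_eq_edgePoly_add (x₀ x₁ x₂ x₃ : F) :
    quadPoly g K c x₀ x₁ x₂ x₃ =
      edgePoly g K c x₁ x₂ + g * secondDiff K x₀ x₁ x₂ * secondDiff K x₁ x₂ x₃ := by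
  unfold quadPoly edgePoly secondDiff
  ring

theorem edgePoly_mul_sub (x₀ x₁ x₂ x₃ x₄ : F) :
    edgePoly g K c x₂ x₃ * (x₄ - x₀) =
      secondDiff K x₂ x₃ x₄ * quadPoly g K c x₀ x₁ x₂ x₃ -
        secondDiff K x₀ x₃ x₂ * quadPoly g K c x₁ x₂ x₃ x₄ := by
  unfold quadPoly edgePoly secondDiff
  ring

theorem miuraDerivThird_numerator_mul_sub (x₀ x₁ x₂ x₃ x₄ : F) :
    g * (g * K * (2 * x₂ - K * x₁) * secondDiff K x₀ x₁ x₂ * secondDiff K x₁ x₂ x₃ -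
        edgePoly g K c x₁ x₂ * (secondDiff K x₁ x₂ x₃ - K * secondDiff K x₀ x₁ x₂)) *
        (x₄ - x₀) =
      quadPoly g K c x₀ x₁ x₂ x₃ *
          (quadPoly g K c x₀ x₁ x₂ x₃ - g * secondDiff K x₀ x₁ x₂ * secondDiff K x₁ x₄ x₃) -
        quadPoly g K c x₁ x₂ x₃ x₄ * edgePoly g K c x₀ x₁ := by
  unfold quadPoly edgePoly secondDiff
  ring

variable {g K c} {x₀ x₁ x₂ x₃ x₄ x₅ : F}

theorem latticeFlow_eq (h₀ : quadPoly g K c x₀ x₁ x₂ x₃ ≠ 0)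
    (h₁ : quadPoly g K c x₁ x₂ x₃ x₄ ≠ 0) :
    latticeFlow g K c x₀ x₁ x₂ x₃ x₄ =
      edgePoly g K c x₁ x₂ * (secondDiff K x₂ x₃ x₄ / quadPoly g K c x₁ x₂ x₃ x₄ -
        secondDiff K x₀ x₃ x₂ / quadPoly g K c x₀ x₁ x₂ x₃) := by
  rw [latticeFlow, mul_assoc, edgePoly_mul_sub g K c x₀ x₁]
  field_simp

theorem miuraDerivThird_mul_latticeFlow (h₀ : quadPoly g K c x₀ x₁ x₂ x₃ ≠ 0)
    (h₁ : quadPoly g K c x₁ x₂ x₃ x₄ ≠ 0) :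
    miuraDerivThird g K c x₀ x₁ x₂ x₃ * latticeFlow g K c x₀ x₁ x₂ x₃ x₄ =
      edgePoly g K c x₁ x₂ / quadPoly g K c x₀ x₁ x₂ x₃ * edgePoly g K c x₂ x₃ *
        ((1 - g * secondDiff K x₀ x₁ x₂ * secondDiff K x₁ x₄ x₃ / quadPoly g K c x₀ x₁ x₂ x₃) /
            quadPoly g K c x₁ x₂ x₃ x₄ -
          edgePoly g K c x₀ x₁ / quadPoly g K c x₀ x₁ x₂ x₃ ^ 2) := by
  have hnum := miuraDerivThird_numerator_mul_sub g K c x₀ x₁ x₂ x₃ x₄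
  rw [miuraDerivThird, latticeFlow]
  field_simp
  linear_combination edgePoly g K c x₁ x₂ * edgePoly g K c x₂ x₃ * hnum

theorem miura_eq (h₀ : quadPoly g K c x₀ x₁ x₂ x₃ ≠ 0) :
    miura g K c x₀ x₁ x₂ x₃ =
      -(g * secondDiff K x₀ x₁ x₂ * secondDiff K x₁ x₂ x₃) / quadPoly g K c x₀ x₁ x₂ x₃ := by
  rw [miura, div_sub_one h₀, quadPoly_eq_edgePoly_add]
  ring

theorem miura_mul_one_div_add_one_mul (h₀ : quadPoly g K c x₀ x₁ x₂ x₃ ≠ 0)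
    (h₁ : quadPoly g K c x₁ x₂ x₃ x₄ ≠ 0) (h₂ : quadPoly g K c x₂ x₃ x₄ x₅ ≠ 0)
    (hw : miura g K c x₁ x₂ x₃ x₄ ≠ 0) :
    miura g K c x₂ x₃ x₄ x₅ * (1 / miura g K c x₁ x₂ x₃ x₄ + 1) * miura g K c x₀ x₁ x₂ x₃ =
      -(g * secondDiff K x₀ x₁ x₂ * secondDiff K x₃ x₄ x₅ * edgePoly g K c x₂ x₃) /
        (quadPoly g K c x₀ x₁ x₂ x₃ * quadPoly g K c x₂ x₃ x₄ x₅) := by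
  have hadd : 1 / miura g K c x₁ x₂ x₃ x₄ + 1 =
      edgePoly g K c x₂ x₃ / quadPoly g K c x₁ x₂ x₃ x₄ / miura g K c x₁ x₂ x₃ x₄ := by
    rw [div_add_one hw, miura, add_sub_cancel]
  rw [miura_eq h₁] at hw
  have hfactors : (g ≠ 0 ∧ secondDiff K x₁ x₂ x₃ ≠ 0) ∧ secondDiff K x₂ x₃ x₄ ≠ 0 := by
    simpa [h₁] using hw
  obtain ⟨⟨hg, hD₁⟩, hD₂⟩ := hfactors
  rw [hadd, miura_eq h₀, miura_eq h₁, miura_eq h₂]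
  field_simp

theorem miuraDeriv_mul_latticeFlow_right (h₀ : quadPoly g K c x₀ x₁ x₂ x₃ ≠ 0)
    (h₁ : quadPoly g K c x₁ x₂ x₃ x₄ ≠ 0) (h₂ : quadPoly g K c x₂ x₃ x₄ x₅ ≠ 0)
    (hw : miura g K c x₁ x₂ x₃ x₄ ≠ 0) :
    miuraDerivThird g K c x₀ x₁ x₂ x₃ * latticeFlow g K c x₀ x₁ x₂ x₃ x₄ +
        miuraDerivFourth g K c x₀ x₁ x₂ x₃ * latticeFlow g K c x₁ x₂ x₃ x₄ x₅ =
      (miura g K c x₀ x₁ x₂ x₃ + 1) *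
        (miura g K c x₂ x₃ x₄ x₅ * (1 / miura g K c x₁ x₂ x₃ x₄ + 1) * miura g K c x₀ x₁ x₂ x₃ +
          (miura g K c x₁ x₂ x₃ x₄ + 1) -
          edgePoly g K c x₀ x₁ * edgePoly g K c x₂ x₃ / quadPoly g K c x₀ x₁ x₂ x₃ ^ 2) := by
  rw [miura_mul_one_div_add_one_mul h₀ h₁ h₂ hw, miuraDerivThird_mul_latticeFlow h₀ h₁,
    latticeFlow_eq h₁ h₂, miuraDerivFourth, miura, miura, sub_add_cancel, sub_add_cancel]
  field_simp
  ring

theorem miuraDeriv_mul_latticeFlow_left (h₀ : quadPoly g K c x₀ x₁ x₂ x₃ ≠ 0)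
    (h₁ : quadPoly g K c x₁ x₂ x₃ x₄ ≠ 0) (h₂ : quadPoly g K c x₂ x₃ x₄ x₅ ≠ 0)
    (hw : miura g K c x₁ x₂ x₃ x₄ ≠ 0) :
    miuraDerivThird g K c x₅ x₄ x₃ x₂ * latticeFlow g K c x₁ x₂ x₃ x₄ x₅ +
        miuraDerivFourth g K c x₅ x₄ x₃ x₂ * latticeFlow g K c x₀ x₁ x₂ x₃ x₄ =
      -((miura g K c x₂ x₃ x₄ x₅ + 1) *
        (miura g K c x₂ x₃ x₄ x₅ * (1 / miura g K c x₁ x₂ x₃ x₄ + 1) * miura g K c x₀ x₁ x₂ x₃ +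
          (miura g K c x₁ x₂ x₃ x₄ + 1) -
          edgePoly g K c x₂ x₃ * edgePoly g K c x₄ x₅ / quadPoly g K c x₂ x₃ x₄ x₅ ^ 2)) := by
  rw [quadPoly_reverse] at h₀ h₁ h₂
  rw [miura_reverse] at hw
  have hright := miuraDeriv_mul_latticeFlow_right h₂ h₁ h₀ hw
  rw [latticeFlow_reverse g K c x₁, latticeFlow_reverse g K c x₀, miura_reverse g K c x₀,
    miura_reverse g K c x₁, miura_reverse g K c x₂, quadPoly_reverse g K c x₂,
    edgePoly_comm g K c x₂, edgePoly_comm g K c x₄]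
  linear_combination -hright

end Algebra

section Calculus

variable {𝕜 F : Type*} [NontriviallyNormedField 𝕜] [NontriviallyNormedField F] [NormedAlgebra 𝕜 F]

theorem hasDerivAt_edgePoly (g K c : F) {x₀ x₁ : 𝕜 → F} {x₀' x₁' : F} {t : 𝕜}
    (h₀ : HasDerivAt x₀ x₀' t) (h₁ : HasDerivAt x₁ x₁' t) :
    HasDerivAt (fun s => edgePoly g K c (x₀ s) (x₁ s))
      (g * K * ((2 * x₀ t - K * x₁ t) * x₀' + (2 * x₁ t - K * x₀ t) * x₁')) t := by
  refine (((((h₀.fun_pow 2).fun_add (h₁.fun_pow 2)).fun_sub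
    ((h₀.const_mul K).fun_mul h₁)).const_mul (g * K)).add_const c).congr_deriv ?_
  push_cast
  ring

theorem hasDerivAt_quadPoly (g K c : F) {x₀ x₁ x₂ x₃ : 𝕜 → F} {x₀' x₁' x₂' x₃' : F} {t : 𝕜}
    (h₀ : HasDerivAt x₀ x₀' t) (h₁ : HasDerivAt x₁ x₁' t) (h₂ : HasDerivAt x₂ x₂' t)
    (h₃ : HasDerivAt x₃ x₃' t) :
    HasDerivAt (fun s => quadPoly g K c (x₀ s) (x₁ s) (x₂ s) (x₃ s))
      (g * (secondDiff K (x₁ t) (x₂ t) (x₃ t) * x₀' + secondDiff K (x₀ t) (x₃ t) (x₂ t) * x₁' +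
        secondDiff K (x₁ t) (x₀ t) (x₃ t) * x₂' + secondDiff K (x₀ t) (x₁ t) (x₂ t) * x₃')) t := by
  refine ((((((h₀.fun_mul h₁).fun_add (h₁.fun_mul h₂)).fun_add (h₂.fun_mul h₃)).fun_add
    (h₀.fun_mul h₃)).fun_sub
    (((h₀.fun_mul h₂).fun_add (h₁.fun_mul h₃)).const_mul K)).const_mul g
    |>.add_const c).congr_deriv ?_
  unfold secondDiff
  ring

theorem hasDerivAt_miura (g K c : F) {x₀ x₁ x₂ x₃ : 𝕜 → F} {x₀' x₁' x₂' x₃' : F} {t : 𝕜}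
    (h₀ : HasDerivAt x₀ x₀' t) (h₁ : HasDerivAt x₁ x₁' t) (h₂ : HasDerivAt x₂ x₂' t)
    (h₃ : HasDerivAt x₃ x₃' t) (hP : quadPoly g K c (x₀ t) (x₁ t) (x₂ t) (x₃ t) ≠ 0) :
    HasDerivAt (fun s => miura g K c (x₀ s) (x₁ s) (x₂ s) (x₃ s))
      (miuraDerivThird g K c (x₀ t) (x₁ t) (x₂ t) (x₃ t) * x₂' +
        miuraDerivFourth g K c (x₀ t) (x₁ t) (x₂ t) (x₃ t) * x₃' +
        (miuraDerivThird g K c (x₃ t) (x₂ t) (x₁ t) (x₀ t) * x₁' +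
        miuraDerivFourth g K c (x₃ t) (x₂ t) (x₁ t) (x₀ t) * x₀')) t := by
  refine (((hasDerivAt_edgePoly g K c h₁ h₂).fun_div (hasDerivAt_quadPoly g K c h₀ h₁ h₂ h₃)
    hP).sub_const 1).congr_deriv ?_
  unfold miuraDerivThird miuraDerivFourth
  rw [quadPoly_reverse g K c (x₃ t)]
  simp only [← add_div, div_mul_eq_mul_div]
  congr 1
  unfold quadPoly edgePoly secondDiff
  ring

theorem stmt14_general (g K c : F) (u : ℤ → 𝕜 → F) (t : 𝕜)
    (hP : ∀ n : ℤ, quadPoly g K c (u (n - 1) t) (u n t) (u (n + 1) t) (u (n + 2) t) ≠ 0)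
    (hu : ∀ n : ℤ, HasDerivAt (u n) (latticeFlow g K c (u (n - 2) t) (u (n - 1) t) (u n t)
      (u (n + 1) t) (u (n + 2) t)) t)
    (w : ℤ → 𝕜 → F)
    (hw : ∀ n s, w n s = miura g K c (u (n - 1) s) (u n s) (u (n + 1) s) (u (n + 2) s))
    (n : ℤ) (h₁ : w (n + 1) t ≠ 0) (hm₁ : w (n - 1) t ≠ 0) :
    HasDerivAt (w n)
      ((w n t + 1) * (w (n + 2) t * (1 / w (n + 1) t + 1) * w n t
        - w n t * (1 / w (n - 1) t + 1) * w (n - 2) t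
        + w (n + 1) t - w (n - 1) t)) t := by
  have hderiv := hasDerivAt_miura g K c (hu (n - 1)) (hu n) (hu (n + 1)) (hu (n + 2)) (hP n)
  rw [← funext (hw n)] at hderiv
  refine hderiv.congr_deriv ?_
  have hPm₂ := hP (n - 2)
  have hPm₁ := hP (n - 1)
  have hP₀ := hP n
  have hP₁ := hP (n + 1)
  have hP₂ := hP (n + 2)
  -- Subtraction is unfolded so that every lattice index takes the form `n + k`.
  simp only [hw, sub_eq_add_neg, add_assoc, Int.reduceAdd, add_zero]
    at h₁ hm₁ hPm₂ hPm₁ hP₀ hP₁ hP₂ ⊢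
  have hright := miuraDeriv_mul_latticeFlow_right hP₀ hP₁ hP₂ h₁
  have hleft := miuraDeriv_mul_latticeFlow_left hPm₂ hPm₁ hP₀ hm₁
  linear_combination hright + hleft

end Calculus

/-- The substitution w = H/P − 1 maps solutions of the trigonometric case
(Qut-trig) of the lattice equation (HPut) to solutions of the universal
equation (wt). -/
theorem stmt14 (γ : ℝ) (hγ : γ ≠ 0)
    (c : ℝ) (hc : c = (1 - γ ^ 2) ^ 2 * (1 + γ⁻¹ ^ 2) / 4)
    (H : ℝ → ℝ → ℝ) (P : ℝ → ℝ → ℝ → ℝ → ℝ)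
    (hH : ∀ x y, H x y = (γ + γ⁻¹) * (y - γ * x) * (γ * y - x) + c)
    (hP : ∀ a b c' d, P a b c' d =
      (γ * d - a) * (c' - γ * b) + (d - γ * c') * (γ * a - b) + c)
    (u : ℤ → ℝ → ℝ)
    (hPne : ∀ (n : ℤ) (t : ℝ),
      P (u (n - 1) t) (u n t) (u (n + 1) t) (u (n + 2) t) ≠ 0)
    (hu : ∀ (n : ℤ) (t : ℝ), HasDerivAt (u n)
      (H (u (n - 1) t) (u n t) * H (u n t) (u (n + 1) t)
          * (u (n + 2) t - u (n - 2) t)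
        / (P (u (n - 2) t) (u (n - 1) t) (u n t) (u (n + 1) t)
          * P (u (n - 1) t) (u n t) (u (n + 1) t) (u (n + 2) t))) t)
    (w : ℤ → ℝ → ℝ)
    (hw : ∀ (n : ℤ) (t : ℝ), w n t = H (u n t) (u (n + 1) t)
      / P (u (n - 1) t) (u n t) (u (n + 1) t) (u (n + 2) t) - 1)
    (n : ℤ) (t : ℝ) (h1 : w (n + 1) t ≠ 0) (hm1 : w (n - 1) t ≠ 0) :
    HasDerivAt (w n)
      ((w n t + 1) * (w (n + 2) t * (1 / w (n + 1) t + 1) * w n t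
        - w n t * (1 / w (n - 1) t + 1) * w (n - 2) t
        + w (n + 1) t - w (n - 1) t)) t := by
  obtain rfl : H = edgePoly γ (γ + γ⁻¹) c := by ext; rw [hH, edgePoly_add_inv c hγ]
  obtain rfl : P = quadPoly γ (γ + γ⁻¹) c := by ext; rw [hP, quadPoly_add_inv c hγ]
  exact stmt14_general γ (γ + γ⁻¹) c u t (hPne · t) (hu · t) w hw n h1 hm1
end

section
/- Let q, p : ℤ → ℝ → ℝ be nonvanishing and satisfy the coupled system q' = q₋₁(qp+1)(qp₁+1), p' = −p₁(qp+1)(q₋₁p+1) (the flow ∂_y) and q• = q₁(qp+1)(qp₁+1), p• = −p₋₁(qp+1)(q₋₁p+1) (the flow ∂_z), where ' and • denote derivatives with respect to the two time variables y and z. Define u on ℤ by u(2k) = q(k), u(2k−1) = p(k). Then with respect to t := z − y, i.e. ∂_t = ∂_z − ∂_y, the function u satisfies at every site (even and odd) the single equation ∂_t u = (u₁u+1)(uu₋₁+1)(u₂−u₋₂). -/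
/-!
Written in terms of `u`, both flows of case (G) move a site at a rate which is the common factor
`F = (u₁u+1)(uu₋₁+1)` times a single second neighbour: `∂_y u = u₋₂F` and `∂_z u = u₂F` at even
sites, `∂_y u = -u₂F` and `∂_z u = -u₋₂F` at odd sites. The two flows thus differ between the
parities, but `∂_z u - ∂_y u = (u₂ - u₋₂)F` in both cases.
-/

section Derivative

variable {𝕜 E₁ E₂ F : Type*} [NontriviallyNormedField 𝕜]
  [NormedAddCommGroup E₁] [NormedSpace 𝕜 E₁] [NormedAddCommGroup E₂] [NormedSpace 𝕜 E₂]
  [NormedAddCommGroup F] [NormedSpace 𝕜 F]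

theorem hasFDerivAt_coprod_of_partials {f : E₁ × E₂ → F} {x₁ : E₁} {x₂ : E₂}
    {f₁ : E₁ →L[𝕜] F} {f₂ : E₂ →L[𝕜] F} (hf : DifferentiableAt 𝕜 f (x₁, x₂))
    (hf₁ : HasFDerivAt (fun x => f (x, x₂)) f₁ x₁)
    (hf₂ : HasFDerivAt (fun x => f (x₁, x)) f₂ x₂) :
    HasFDerivAt f (f₁.coprod f₂) (x₁, x₂) := by
  obtain ⟨L, hL⟩ := hf
  have hL₁ : L ∘L .inl 𝕜 E₁ E₂ = f₁ := (hL.comp x₁ (hasFDerivAt_prodMk_left x₁ x₂)).unique hf₁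
  have hL₂ : L ∘L .inr 𝕜 E₁ E₂ = f₂ := (hL.comp x₂ (hasFDerivAt_prodMk_right x₁ x₂)).unique hf₂
  rwa [← hL₁, ← hL₂, ContinuousLinearMap.coprod_comp_inl_inr]

theorem hasDerivAt_antidiagonal {f : 𝕜 → 𝕜 → F} {y z : 𝕜} {a b : F}
    (hf : DifferentiableAt 𝕜 (fun v : 𝕜 × 𝕜 => f v.1 v.2) (y, z))
    (hy : HasDerivAt (fun s => f s z) a y) (hz : HasDerivAt (fun s => f y s) b z) :
    HasDerivAt (fun s => f (y - s) (z + s)) (b - a) 0 := by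
  have hline := (hasFDerivAt_coprod_of_partials hf hy.hasFDerivAt hz.hasFDerivAt).hasLineDerivAt
    (-1, 1)
  simpa [HasLineDerivAt, ← sub_eq_add_neg, neg_add_eq_sub] using hline

end Derivative

section Lattice

variable {R : Type*} [CommRing R]

/-- The right-hand side `(u₁u+1)(uu₋₁+1)(u₂-u₋₂)` of lattice equation (g) at the site `m`, where
`uⱼ` stands for `u (m + j)`. -/
def latticeField (u : ℤ → R) (m : ℤ) : R :=
  (u (m + 1) * u m + 1) * (u m * u (m - 1) + 1) * (u (m + 2) - u (m - 2))

variable {u q p : ℤ → R}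

theorem latticeField_two_mul (hq : ∀ k, u (2 * k) = q k) (hp : ∀ k, u (2 * k - 1) = p k) (k : ℤ) :
    latticeField u (2 * k) =
      q (k + 1) * (q k * p k + 1) * (q k * p (k + 1) + 1) -
        q (k - 1) * (q k * p k + 1) * (q k * p (k + 1) + 1) := by
  have hnext : u (2 * k + 1) = p (k + 1) := by rw [← hp]; congr 1; ring
  have hnext₂ : u (2 * k + 2) = q (k + 1) := by rw [← hq]; congr 1; ring
  have hprev₂ : u (2 * k - 2) = q (k - 1) := by rw [← hq]; congr 1; ring
  rw [latticeField, hnext, hnext₂, hprev₂, hq, hp]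
  ring

theorem latticeField_two_mul_sub_one (hq : ∀ k, u (2 * k) = q k) (hp : ∀ k, u (2 * k - 1) = p k)
    (k : ℤ) :
    latticeField u (2 * k - 1) =
      -p (k - 1) * (q k * p k + 1) * (q (k - 1) * p k + 1) -
        -p (k + 1) * (q k * p k + 1) * (q (k - 1) * p k + 1) := by
  have hnext : u (2 * k - 1 + 1) = q k := by rw [sub_add_cancel, hq]
  have hprev : u (2 * k - 1 - 1) = q (k - 1) := by rw [← hq]; congr 1; ring
  have hnext₂ : u (2 * k - 1 + 2) = p (k + 1) := by rw [← hp]; congr 1; ring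
  have hprev₂ : u (2 * k - 1 - 2) = p (k - 1) := by rw [← hp]; congr 1; ring
  rw [latticeField, hnext, hprev, hnext₂, hprev₂, hp]
  ring

end Lattice

theorem stmt16_general {𝕜 A : Type*} [NontriviallyNormedField 𝕜] [NormedCommRing A]
    [NormedAlgebra 𝕜 A] {q p : ℤ → 𝕜 → 𝕜 → A} {y z : 𝕜}
    (hqdiff : ∀ k, DifferentiableAt 𝕜 (fun v : 𝕜 × 𝕜 => q k v.1 v.2) (y, z))
    (hpdiff : ∀ k, DifferentiableAt 𝕜 (fun v : 𝕜 × 𝕜 => p k v.1 v.2) (y, z))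
    (hqy : ∀ k, HasDerivAt (fun s => q k s z)
      (q (k - 1) y z * (q k y z * p k y z + 1) * (q k y z * p (k + 1) y z + 1)) y)
    (hpy : ∀ k, HasDerivAt (fun s => p k s z)
      (-p (k + 1) y z * (q k y z * p k y z + 1) * (q (k - 1) y z * p k y z + 1)) y)
    (hqz : ∀ k, HasDerivAt (fun s => q k y s)
      (q (k + 1) y z * (q k y z * p k y z + 1) * (q k y z * p (k + 1) y z + 1)) z)
    (hpz : ∀ k, HasDerivAt (fun s => p k y s)
      (-p (k - 1) y z * (q k y z * p k y z + 1) * (q (k - 1) y z * p k y z + 1)) z)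
    {u : ℤ → 𝕜 → 𝕜 → A} (hu : ∀ k, u (2 * k) = q k ∧ u (2 * k - 1) = p k) (m : ℤ) :
    HasDerivAt (fun s => u m (y - s) (z + s)) (latticeField (fun j => u j y z) m) 0 := by
  have hq (k : ℤ) : u (2 * k) y z = q k y z := by rw [(hu k).1]
  have hp (k : ℤ) : u (2 * k - 1) y z = p k y z := by rw [(hu k).2]
  obtain ⟨k, rfl | rfl⟩ : ∃ k, m = 2 * k ∨ m = 2 * k - 1 := ⟨(m + 1) / 2, by lia⟩
  · rw [latticeField_two_mul hq hp, (hu k).1]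
    exact hasDerivAt_antidiagonal (hqdiff k) (hqy k) (hqz k)
  · rw [latticeField_two_mul_sub_one hq hp, (hu k).2]
    exact hasDerivAt_antidiagonal (hpdiff k) (hpy k) (hpz k)

/-- Derivation of lattice equation (g): interleaving the two-component flows
∂_y and ∂_z of case (G), the difference ∂_t = ∂_z − ∂_y is governed at every
site by the single equation u' = (u₁u+1)(uu₋₁+1)(u₂−u₋₂). -/
theorem stmt16 (q p : ℤ → ℝ → ℝ → ℝ)
    (hqdiff : ∀ k : ℤ, Differentiable ℝ (fun v : ℝ × ℝ => q k v.1 v.2))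
    (hpdiff : ∀ k : ℤ, Differentiable ℝ (fun v : ℝ × ℝ => p k v.1 v.2))
    (hqy : ∀ (k : ℤ) (y z : ℝ), HasDerivAt (fun s => q k s z)
      (q (k - 1) y z * (q k y z * p k y z + 1) * (q k y z * p (k + 1) y z + 1)) y)
    (hpy : ∀ (k : ℤ) (y z : ℝ), HasDerivAt (fun s => p k s z)
      (-p (k + 1) y z * (q k y z * p k y z + 1) * (q (k - 1) y z * p k y z + 1)) y)
    (hqz : ∀ (k : ℤ) (y z : ℝ), HasDerivAt (fun s => q k y s)
      (q (k + 1) y z * (q k y z * p k y z + 1) * (q k y z * p (k + 1) y z + 1)) z)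
    (hpz : ∀ (k : ℤ) (y z : ℝ), HasDerivAt (fun s => p k y s)
      (-p (k - 1) y z * (q k y z * p k y z + 1) * (q (k - 1) y z * p k y z + 1)) z)
    (u : ℤ → ℝ → ℝ → ℝ)
    (hu : ∀ k : ℤ, u (2 * k) = q k ∧ u (2 * k - 1) = p k) :
    ∀ (m : ℤ) (y z : ℝ), HasDerivAt (fun s => u m (y - s) (z + s))
      ((u (m + 1) y z * u m y z + 1) * (u m y z * u (m - 1) y z + 1)
        * (u (m + 2) y z - u (m - 2) y z)) 0 :=
  fun m y z => stmt16_general (fun k => hqdiff k (y, z)) (fun k => hpdiff k (y, z))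
    (fun k => hqy k y z) (fun k => hpy k y z) (fun k => hqz k y z) (fun k => hpz k y z) hu m
end
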